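/- For every binary head tree T with n leaves and every subtree S of T whose span is the interval {i,…,j}, the arc set arcs(S) forms a dependency tree on the positions {i,…,j} rooted at head(S): head(S) lies in {i,…,j}, every position in {i,…,j} other than head(S) has exactly one incoming arc in arcs(S), and every position in {i,…,j} reaches head(S) by repeatedly following its incoming arc backward. -/

import Mathlib

/-- Binary head trees (BHTs). -/
inductive BHT : Type where
  | leaf : BHT
  | nodeL (l r : BHT) : BHT
  | nodeR (l r : BHT) : BHT

/-- Number of leaves of a BHT. -/
def BHT.numLeaves : BHT → ℕ
  | .leaf => 1
  | .nodeL l r => l.numLeaves + r.numLeaves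
  | .nodeR l r => l.numLeaves + r.numLeaves

/-- Head position of a BHT whose span of leaf positions starts at `i`. -/
def BHT.headAt : BHT → ℕ → ℕ
  | .leaf, i => i
  | .nodeL l _, i => l.headAt i
  | .nodeR l r, i => r.headAt (i + l.numLeaves)

/-- Head position of a BHT placed over positions `0, …, numLeaves - 1`. -/
def BHT.head (T : BHT) : ℕ := T.headAt 0

/-- Arc set of a BHT whose span of leaf positions starts at `i`. -/
def BHT.arcsAt : BHT → ℕ → Set (ℕ × ℕ)
  | .leaf, _ => ∅
  | .nodeL l r, i =>
      insert (l.headAt i, r.headAt (i + l.numLeaves)) (l.arcsAt i ∪ r.arcsAt (i + l.numLeaves))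
  | .nodeR l r, i =>
      insert (r.headAt (i + l.numLeaves), l.headAt i) (l.arcsAt i ∪ r.arcsAt (i + l.numLeaves))

/-- Arc set of a BHT placed over positions `0, …, numLeaves - 1`. -/
def BHT.arcs (T : BHT) : Set (ℕ × ℕ) := T.arcsAt 0

/-- `S` is a subtree of `T` (placed over positions `0, …, numLeaves - 1`) whose
leaf span starts at absolute position `i`. -/
inductive BHT.SubtreeAt : BHT → ℕ → BHT → Prop
  | refl (T : BHT) : BHT.SubtreeAt T 0 T
  | inlL (l r S : BHT) (i : ℕ) : BHT.SubtreeAt l i S → BHT.SubtreeAt (BHT.nodeL l r) i S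
  | inrL (l r S : BHT) (i : ℕ) :
      BHT.SubtreeAt r i S → BHT.SubtreeAt (BHT.nodeL l r) (l.numLeaves + i) S
  | inlR (l r S : BHT) (i : ℕ) : BHT.SubtreeAt l i S → BHT.SubtreeAt (BHT.nodeR l r) i S
  | inrR (l r S : BHT) (i : ℕ) :
      BHT.SubtreeAt r i S → BHT.SubtreeAt (BHT.nodeR l r) (l.numLeaves + i) S

/-- `bht2dep T j = some i` if `i` is the unique position with `(i, j) ∈ arcs T`,
and `none` if `j` has no incoming arc. -/
noncomputable def bht2dep (n : ℕ) (T : BHT) : Fin n → Option (Fin n) := fun j =>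
  letI := Classical.dec (∃! i : Fin n, ((i : ℕ), (j : ℕ)) ∈ T.arcs)
  if h : ∃! i : Fin n, ((i : ℕ), (j : ℕ)) ∈ T.arcs then some h.choose else none

/-- `head` is a dependency tree on `n` words: exactly one root (position with
`head r = none`), and every position reaches the root by iterating `head`. -/
def IsDepTree {n : ℕ} (head : Fin n → Option (Fin n)) : Prop :=
  ∃ r : Fin n, head r = none ∧ (∀ r' : Fin n, head r' = none → r' = r) ∧
    ∀ j : Fin n, Relation.ReflTransGen (fun a b => head a = some b) j r

/-- A dependency tree is projective if every position's set of descendants is an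
interval of consecutive positions. -/
def Projective {n : ℕ} (head : Fin n → Option (Fin n)) : Prop :=
  ∀ i : Fin n, ∃ a b : Fin n,
    ∀ j : Fin n, Relation.ReflTransGen (fun x y => head x = some y) j i ↔ (a ≤ j ∧ j ≤ b)

/-- The six hexatags: `tL`/`tR` are terminal tags (leaf that is a left/right child);
`leftL`/`leftR` are `⇐L`/`⇐R` (internal left child with head-label L/R);
`rightL`/`rightR` are `⇒L`/`⇒R` (internal right child with head-label L/R). -/
inductive Hexatag : Type where
  | tL | tR | leftL | leftR | rightL | rightR
deriving DecidableEq

/-- A hexatag is terminal if it is `tL` or `tR`. -/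
def Hexatag.isTerminal : Hexatag → Prop
  | .tL => True
  | .tR => True
  | _ => False

/-- In-order linearization; the Boolean records whether the current subtree is a
right child of its parent (the root counts as a left child by convention). -/
def BHT.hexatagsAux : BHT → Bool → List Hexatag
  | .leaf, false => [.tL]
  | .leaf, true => [.tR]
  | .nodeL l r, b =>
      l.hexatagsAux false ++ (if b then Hexatag.rightL else Hexatag.leftL) :: r.hexatagsAux true
  | .nodeR l r, b =>
      l.hexatagsAux false ++ (if b then Hexatag.rightR else Hexatag.leftR) :: r.hexatagsAux true

/-- The hexatag linearization of a BHT. -/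
def BHT.hexatags (T : BHT) : List Hexatag := T.hexatagsAux false

/-- The tags emitted for the leaves of a BHT, in left-to-right order. -/
def BHT.leafTagsAux : BHT → Bool → List Hexatag
  | .leaf, false => [.tL]
  | .leaf, true => [.tR]
  | .nodeL l r, _ => l.leafTagsAux false ++ r.leafTagsAux true
  | .nodeR l r, _ => l.leafTagsAux false ++ r.leafTagsAux true

/-- The tags emitted for the leaves of a BHT in left-to-right order (root
counts as a left child by convention). -/
def BHT.leafTags (T : BHT) : List Hexatag := T.leafTagsAux false

/-- Partial BHTs: binary head trees possibly containing a dummy placeholder. -/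
inductive PBHT : Type where
  | dummy : PBHT
  | leaf : PBHT
  | nodeL (l r : PBHT) : PBHT
  | nodeR (l r : PBHT) : PBHT
deriving DecidableEq

/-- Does a partial BHT contain a dummy? -/
def PBHT.hasDummy : PBHT → Bool
  | .dummy => true
  | .leaf => false
  | .nodeL l r => l.hasDummy || r.hasDummy
  | .nodeR l r => l.hasDummy || r.hasDummy

/-- Substitute `u` for the dummy in a partial BHT. -/
def PBHT.subst : PBHT → PBHT → PBHT
  | .dummy, u => u
  | .leaf, _ => .leaf
  | .nodeL l r, u => .nodeL (l.subst u) (r.subst u)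
  | .nodeR l r, u => .nodeR (l.subst u) (r.subst u)

/-- One step of the left-corner decoder on a stack of partial BHTs. -/
def hexStep : List PBHT → Hexatag → Option (List PBHT)
  | st, .tL => some (.leaf :: st)
  | t :: st, .tR => if t.hasDummy then some (t.subst .leaf :: st) else none
  | t :: st, .leftL => some (.nodeL t .dummy :: st)
  | t :: st, .leftR => some (.nodeR t .dummy :: st)
  | t :: u :: st, .rightL =>
      if u.hasDummy then some (u.subst (.nodeL t .dummy) :: st) else none
  | t :: u :: st, .rightR =>
      if u.hasDummy then some (u.subst (.nodeR t .dummy) :: st) else none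
  | _, _ => none

/-- The left-corner decoder: run the stack operations; succeed iff every
operation is defined and the final stack is a single dummy-free tree. -/
def tags2bht (τ : List Hexatag) : Option PBHT :=
  match τ.foldlM hexStep ([] : List PBHT) with
  | some [t] => if t.hasDummy then none else some t
  | _ => none

/-- Embedding of BHTs into partial BHTs. -/
def BHT.toPBHT : BHT → PBHT
  | .leaf => .leaf
  | .nodeL l r => .nodeL l.toPBHT r.toPBHT
  | .nodeR l r => .nodeR l.toPBHT r.toPBHT

/-- Stack-count increment of a hexatag. -/
def Hexatag.delta : Hexatag → ℤ
  | .tL => 1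
  | .tR => 0
  | .leftL => 0
  | .leftR => 0
  | .rightL => -1
  | .rightR => -1

/-- Running stack count `sₖ` after the first `k` tags of `τ`. -/
def stackCount (τ : List Hexatag) (k : ℕ) : ℤ :=
  ((τ.take k).map Hexatag.delta).sum

/-- Validity of a hexatag list (0-indexed: Lean index `k` is 1-indexed position `k+1`). -/
def ValidTags (τ : List Hexatag) : Prop :=
  (τ.length % 2 = 1 ∧
    ∀ k : ℕ, ∀ t : Hexatag, τ[k]? = some t →
      (k % 2 = 0 → t.isTerminal) ∧ (k % 2 = 1 → ¬ t.isTerminal)) ∧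
  τ[0]? = some Hexatag.tL ∧
  (∀ k : ℕ, ∀ t : Hexatag, τ[k]? = some t →
    (t = Hexatag.rightL ∨ t = Hexatag.rightR) → 2 ≤ stackCount τ k) ∧
  stackCount τ τ.length = 1

/-!
Both kinds of internal node glue the dependency trees of their children, which live on disjoint
intervals, by a single arc between the two heads. The target of that arc is the one vertex that
gains an incoming arc, and it is the one vertex that stops being a root.
-/

theorem bijOn_union_of_disjoint {α β : Type*} {f : α → β} {s₁ s₂ : Set α} {t₁ t₂ : Set β}
    (h₁ : Set.BijOn f s₁ t₁) (h₂ : Set.BijOn f s₂ t₂) (ht : Disjoint t₁ t₂) :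
    Set.BijOn f (s₁ ∪ s₂) (t₁ ∪ t₂) := by
  have hne : ∀ a ∈ s₁, ∀ b ∈ s₂, f a ≠ f b := fun _ ha _ hb =>
    ht.ne_of_mem (h₁.mapsTo ha) (h₂.mapsTo hb)
  have hs : Disjoint s₁ s₂ := Set.disjoint_left.2 fun a ha hb => hne a ha a hb rfl
  exact h₁.union h₂ ((Set.injOn_union hs).2 ⟨h₁.injOn, h₂.injOn, hne⟩)

/-- `A` is an arborescence (a dependency tree) with vertex set `s` and root `r`, a pair `(q, p)`
being an arc from `q` to its dependent `p`. Since `Prod.snd` maps an arc to its target,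
`bijOn_snd` says that the vertices other than `r` have exactly one incoming arc, and that no other
point has any. The source of an arc into `p` is then in `s` as well, because `p` can only reach `r`
through it. -/
structure IsArborescenceOn {V : Type*} (A : Set (V × V)) (s : Set V) (r : V) : Prop where
  root_mem : r ∈ s
  bijOn_snd : Set.BijOn Prod.snd A (s \ {r})
  reaches_root : ∀ p ∈ s, Relation.ReflTransGen (fun a b => (b, a) ∈ A) p r

namespace IsArborescenceOn

variable {V : Type*} {A B : Set (V × V)} {s t : Set V} {p r r' : V}

theorem singleton (r : V) : IsArborescenceOn ∅ {r} r where
  root_mem := rfl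
  bijOn_snd := by simp
  reaches_root := by
    rintro p rfl
    exact .refl

theorem existsUnique_arc (h : IsArborescenceOn A s r) (hp : p ∈ s) (hpr : p ≠ r) :
    ∃! q, (q, p) ∈ A := by
  obtain ⟨⟨q, _⟩, hq, rfl⟩ := h.bijOn_snd.surjOn ⟨hp, hpr⟩
  exact ⟨q, hq, fun q' hq' => congrArg Prod.fst (h.bijOn_snd.injOn hq' hq rfl)⟩

theorem bijOn_snd_insert_union (hA : IsArborescenceOn A s r) (hB : IsArborescenceOn B t r')
    (hst : Disjoint s t) :
    Set.BijOn Prod.snd (insert (r, r') (A ∪ B)) ((s ∪ t) \ {r}) := by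
  have hr : r ∉ t := hst.notMem_of_mem_left hA.root_mem
  have hr' : r' ∉ s := hst.notMem_of_mem_right hB.root_mem
  have hdisj : Disjoint (s \ {r}) (t \ {r'}) := hst.mono Set.sdiff_subset Set.sdiff_subset
  have hunion : Set.BijOn Prod.snd (A ∪ B) (s \ {r} ∪ t \ {r'}) :=
    bijOn_union_of_disjoint hA.bijOn_snd hB.bijOn_snd hdisj
  have htargets : insert r' (s \ {r} ∪ t \ {r'}) = (s ∪ t) \ {r} := by
    rw [← Set.union_insert, Set.insert_sdiff_self_of_mem hB.root_mem, Set.union_sdiff_distrib,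
      Set.sdiff_singleton_eq_self hr]
  exact htargets ▸ hunion.insert (by simp [hr'])

theorem insert_union (hA : IsArborescenceOn A s r) (hB : IsArborescenceOn B t r')
    (hst : Disjoint s t) : IsArborescenceOn (insert (r, r') (A ∪ B)) (s ∪ t) r where
  root_mem := .inl hA.root_mem
  bijOn_snd := hA.bijOn_snd_insert_union hB hst
  reaches_root := by
    rintro p (hp | hp)
    · exact Relation.ReflTransGen.mono (fun _ _ h => .inr (.inl h)) _ _ (hA.reaches_root p hp)
    · have reaches_r' := Relation.ReflTransGen.mono
        (fun _ _ h => Set.mem_insert_of_mem (r, r') (Set.mem_union_right A h)) _ _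
        (hB.reaches_root p hp)
      exact reaches_r'.tail (Set.mem_insert _ _)

end IsArborescenceOn

namespace BHT

theorem isArborescenceOn_arcsAt (S : BHT) (i : ℕ) :
    IsArborescenceOn (S.arcsAt i) (Set.Ico i (i + S.numLeaves)) (S.headAt i) := by
  have span_append (i m n : ℕ) :
      Set.Ico i (i + (m + n)) = Set.Ico i (i + m) ∪ Set.Ico (i + m) (i + m + n) := by
    rw [Set.Ico_union_Ico_eq_Ico (by lia) (by lia), add_assoc]
  have spans_disjoint (i m n : ℕ) :
      Disjoint (Set.Ico i (i + m)) (Set.Ico (i + m) (i + m + n)) :=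
    Set.Ico_disjoint_Ico_same
  induction S generalizing i with
  | leaf =>
    rw [numLeaves, Set.Ico_add_one_right_eq_Icc, Set.Icc_self]
    exact .singleton i
  | nodeL l r ihl ihr =>
    rw [numLeaves, span_append]
    exact (ihl i).insert_union (ihr _) (spans_disjoint ..)
  | nodeR l r ihl ihr =>
    rw [numLeaves, span_append, arcsAt, Set.union_comm (arcsAt l i), Set.union_comm (Set.Ico i _)]
    exact (ihr _).insert_union (ihl i) (spans_disjoint ..).symm

end BHT

theorem subtree_arcs_isDepTree (T S : BHT) (i j : ℕ) (hS : BHT.SubtreeAt T i S)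
    (hj : i + S.numLeaves = j + 1) :
    (i ≤ S.headAt i ∧ S.headAt i ≤ j) ∧
    (∀ p : ℕ, i ≤ p → p ≤ j → p ≠ S.headAt i → ∃! q : ℕ, (q, p) ∈ S.arcsAt i) ∧
    (∀ p : ℕ, i ≤ p → p ≤ j →
      Relation.ReflTransGen (fun a b => (b, a) ∈ S.arcsAt i) p (S.headAt i)) := by
  have h : IsArborescenceOn (S.arcsAt i) (Set.Icc i j) (S.headAt i) := by
    rw [← Set.Ico_add_one_right_eq_Icc, ← hj]
    exact S.isArborescenceOn_arcsAt i
  exact ⟨h.root_mem, fun p hip hpj => h.existsUnique_arc ⟨hip, hpj⟩,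
    fun p hip hpj => h.reaches_root p ⟨hip, hpj⟩⟩
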